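/- Fix a prime ℓ. Let G be a closed subgroup of SL₂(ℤ_ℓ) whose image modulo ℓ^e equals SL₂(ℤ/ℓ^eℤ), where e = 3 if ℓ = 2, e = 2 if ℓ = 3, and e = 1 if ℓ ≥ 5. Then G = SL₂(ℤ_ℓ). -/

import Mathlib

open Matrix

/-!
Write `m` for the prime `ℓ`. If `X = u vᵀ` with `vᵀ u = 0`, then `X² = 0` and
`det (1 + m ^ k X) = 1`. Whenever `G` is full modulo `m ^ (k + 1)` it contains some
`1 + m ^ k X + m ^ (k + 1) C`, whose `m`-th power is `1 + m ^ (k + 1) X` modulo `m ^ (k + 2)`: for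
`k ≥ 1` because `2 k + 1 ≥ k + 2`, and for `k = 0` because `(X + m C) ^ 2` is divisible by `m`, its
square by `m ^ 2`, and `m` divides `m.choose 2` and `m.choose 3` when it is coprime to `6`.
Modulo `m ^ (k + 2)`, multiplying matrices `1 + m ^ (k + 1) X` adds the `X`, the rank-one `X` above
additively generate all trace-zero matrices, and a matrix `1 + m ^ (k + 1) W` of determinant `1` has
`W` of trace zero modulo `m`. Hence `G` is full modulo `m ^ (k + 2)`, so inductively modulo every
power of `m`, that is, dense; and it is closed.
-/

lemma exists_one_add_pow_eq_sum_range_add {A : Type*} [Semiring A] (Y : A) (m N : ℕ) :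
    ∃ S, (1 + Y) ^ m = ∑ i ∈ Finset.range N, m.choose i • Y ^ i + Y ^ N * S := by
  refine ⟨∑ i ∈ Finset.range (m + 1), m.choose (N + i) • Y ^ i, ?_⟩
  simp_rw [Finset.mul_sum, mul_smul_comm, ← pow_add]
  rw [← Finset.sum_range_add, add_comm 1 Y, (Commute.one_right Y).add_pow]
  simp only [one_pow, mul_one, ← nsmul_eq_mul']
  refine Finset.sum_subset (Finset.range_subset_range.mpr (by omega)) fun i _ hi ↦ ?_
  rw [Nat.choose_eq_zero_of_lt (by simpa using hi), zero_nsmul]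

lemma dvd_choose_self_of_coprime {m i : ℕ} (hi : i ≠ 0) (h : m.Coprime i) : m ∣ m.choose i := by
  obtain ⟨j, rfl⟩ := Nat.exists_eq_succ_of_ne_zero hi
  cases m with
  | zero => simp
  | succ m => exact h.dvd_of_dvd_mul_right ⟨_, (Nat.add_one_mul_choose_eq m j).symm⟩

section PowerMap

variable {R A : Type*} [CommRing R] [Ring A] [Algebra R A] {X : A}

lemma exists_smul_add_smul_sq_eq (a : R) (k : ℕ) (hX : X * X = 0) (C : A) :
    ∃ Q, (a ^ k • X + a ^ (k + 1) • C) ^ 2 = a ^ (2 * k + 1) • Q := by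
  refine ⟨X * C + C * X + a • (C * C), ?_⟩
  simp only [pow_two, add_mul, mul_add, smul_mul_assoc, mul_smul_comm, hX, smul_zero]
  module

lemma exists_one_add_pow_smul_pow_eq {m k : ℕ} (hk : 1 ≤ k ∨ m.Coprime 6) (hX : X * X = 0)
    (C : A) : ∃ D, (1 + (m : R) ^ k • X + (m : R) ^ (k + 1) • C) ^ m =
      1 + (m : R) ^ (k + 1) • X + (m : R) ^ (k + 2) • D := by
  obtain ⟨Q, hQ⟩ := exists_smul_add_smul_sq_eq (m : R) k hX C
  rw [add_assoc]
  set Y := (m : R) ^ k • X + (m : R) ^ (k + 1) • C with hY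
  have hmY : (m : R) • Y = (m : R) ^ (k + 1) • X + (m : R) ^ (k + 2) • C := by
    rw [hY]
    module
  rcases hk with hk | hm
  · obtain ⟨j, rfl⟩ := Nat.exists_eq_add_of_le hk
    obtain ⟨S, hS⟩ := exists_one_add_pow_eq_sum_range_add Y m 2
    refine ⟨C + (m : R) ^ j • (Q * S), ?_⟩
    simp only [hS, Finset.sum_range_succ, Finset.sum_range_zero, Nat.choose_zero_right, pow_zero,
      Nat.choose_one_right, pow_one, hmY, hQ, smul_mul_assoc, ← Nat.cast_smul_eq_nsmul R]
    module
  · obtain ⟨S, hS⟩ := exists_one_add_pow_eq_sum_range_add Y m 4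
    obtain ⟨b, hb⟩ := dvd_choose_self_of_coprime two_ne_zero
      (hm.coprime_dvd_right (by norm_num : 2 ∣ 6))
    obtain ⟨c, hc⟩ := dvd_choose_self_of_coprime three_ne_zero
      (hm.coprime_dvd_right (by norm_num : 3 ∣ 6))
    have hY3 : Y ^ 3 = Y ^ 2 * Y := pow_succ Y 2
    have hY4 : Y ^ 4 = Y ^ 2 * Y ^ 2 := pow_add Y 2 2
    refine ⟨C + (m : R) ^ k • ((b : R) • Q + (c : R) • (Q * Y) + (m : R) ^ (2 * k) • (Q * Q * S)),
      ?_⟩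
    simp only [hS, Finset.sum_range_succ, Finset.sum_range_zero, Nat.choose_zero_right, pow_zero,
      Nat.choose_one_right, pow_one, hmY, hb, hc, hY3, hY4, hQ, smul_mul_assoc,
      mul_smul_comm, ← Nat.cast_smul_eq_nsmul R, Nat.cast_mul]
    module

end PowerMap

section TraceZero

lemma vecMulVec_single_single {n R : Type*} [DecidableEq n] [MulZeroClass R] (i j : n) (a b : R) :
    vecMulVec (Pi.single i a) (Pi.single j b) = single i j (a * b) := by
  ext
  grind [vecMulVec_apply, mul_zero, zero_mul]

variable {n R : Type*} [Fintype n] [CommRing R]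

variable (n R) in
/-- The additive span of the rank-one square-zero matrices `u vᵀ`, `vᵀ u = 0`. A submonoid rather
than a submodule, since it is compared with `leadingTerms`, which is only closed under addition. -/
def rankOneNilpotentSpan : AddSubmonoid (Matrix n n R) :=
  .closure {X | ∃ u v : n → R, v ⬝ᵥ u = 0 ∧ X = vecMulVec u v}

lemma single_mem_rankOneNilpotentSpan [DecidableEq n] {i j : n} (hij : i ≠ j) (c : R) :
    single i j c ∈ rankOneNilpotentSpan n R :=
  AddSubmonoid.subset_closure
    ⟨Pi.single i c, Pi.single j 1, by simp [hij.symm], by simp [vecMulVec_single_single]⟩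

lemma single_sub_single_mem_rankOneNilpotentSpan [DecidableEq n] (i j : n) (c : R) :
    single i i c - single j j c ∈ rankOneNilpotentSpan n R := by
  rcases eq_or_ne i j with rfl | hij
  · simp [zero_mem]
  have hmem : vecMulVec (Pi.single i c + Pi.single j c) (Pi.single i 1 - Pi.single j 1) ∈
      rankOneNilpotentSpan n R :=
    AddSubmonoid.subset_closure ⟨_, _, by simp [hij, hij.symm], rfl⟩
  have hdecomp : single i i c - single j j c =
      vecMulVec (Pi.single i c + Pi.single j c) (Pi.single i 1 - Pi.single j 1) +
        single i j c + single j i (-c) := by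
    simp only [add_vecMulVec, vecMulVec_sub, vecMulVec_single_single, mul_one, ← single_neg]
    abel
  rw [hdecomp]
  exact add_mem (add_mem hmem (single_mem_rankOneNilpotentSpan hij c))
    (single_mem_rankOneNilpotentSpan hij.symm (-c))

lemma mem_rankOneNilpotentSpan_of_trace_eq_zero {X : Matrix n n R} (hX : X.trace = 0) :
    X ∈ rankOneNilpotentSpan n R := by
  classical
  rcases isEmpty_or_nonempty n with _ | ⟨⟨o⟩⟩
  · simp [Subsingleton.elim X 0, zero_mem]
  have htrace : ∑ i, single o o (X i i) = (0 : Matrix n n R) := by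
    calc
      ∑ i, single o o (X i i) = single o o X.trace :=
        (map_sum (singleAddMonoidHom (α := R) o o) _ _).symm
      _ = 0 := by rw [hX, single_zero]
  have hsum : X = ∑ i, ∑ j, (single i j (X i j) - if i = j then single o o (X i j) else 0) := by
    simp only [Finset.sum_sub_distrib, ← matrix_eq_sum_single, Finset.sum_ite_eq,
      Finset.mem_univ, if_true, htrace, sub_zero]
  rw [hsum]
  refine sum_mem fun i _ ↦ sum_mem fun j _ ↦ ?_
  split_ifs with hij
  · exact hij ▸ single_sub_single_mem_rankOneNilpotentSpan i o _
  · simpa only [sub_zero] using single_mem_rankOneNilpotentSpan hij _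

lemma exists_trace_eq_zero_add_smul {a : R} {W : Matrix n n R} (h : a ∣ W.trace) :
    ∃ X V : Matrix n n R, X.trace = 0 ∧ W = X + a • V := by
  classical
  rcases isEmpty_or_nonempty n with _ | ⟨⟨o⟩⟩
  · exact ⟨0, 0, by simp, Subsingleton.elim _ _⟩
  obtain ⟨t, ht⟩ := h
  exact ⟨W - a • single o o t, single o o t, by simp [ht], by abel⟩

lemma dvd_trace_of_det_one_add_smul_eq_one [DecidableEq n] {a : R} (ha : a ∈ nonZeroDivisors R)
    {W : Matrix n n R} (h : (1 + a • W).det = 1) : a ∣ W.trace := by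
  rw [det_one_add_smul] at h
  set c := Polynomial.eval a _
  refine ⟨-c, (mul_cancel_left_mem_nonZeroDivisors ha).mp ?_⟩
  linear_combination h

end TraceZero

section Congruence

variable {n R : Type*} [Fintype n] [DecidableEq n] [CommRing R]

variable (n) in
/-- The principal congruence subgroup `Γ(I)` of `SLₙ(R)`: the matrices congruent to `1` modulo the
ideal `I`. A subgroup `G` surjects onto the image of `SLₙ(R)` in `SLₙ(R ⧸ I)` iff
`G ⊔ Γ(I) = ⊤`. -/
def principalCongruenceSubgroup (I : Ideal R) : Subgroup (Matrix.SpecialLinearGroup n R) :=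
  (Matrix.SpecialLinearGroup.map (Ideal.Quotient.mk I)).ker

variable {G : Subgroup (Matrix.SpecialLinearGroup n R)} {A : Matrix.SpecialLinearGroup n R}

lemma mem_sup_principalCongruenceSubgroup {I : Ideal R} :
    A ∈ G ⊔ principalCongruenceSubgroup n I ↔ ∃ g ∈ G, ∀ i j, g i j - A i j ∈ I := by
  rw [principalCongruenceSubgroup, ← Subgroup.comap_map_eq, Subgroup.mem_comap, Subgroup.mem_map]
  simp [Matrix.SpecialLinearGroup.ext_iff, Ideal.Quotient.eq]

lemma mem_sup_principalCongruenceSubgroup_span_singleton {a : R} :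
    A ∈ G ⊔ principalCongruenceSubgroup n (Ideal.span {a}) ↔
      ∃ g ∈ G, ∃ C : Matrix n n R, (g : Matrix n n R) = A + a • C := by
  simp only [mem_sup_principalCongruenceSubgroup, Ideal.mem_span_singleton']
  refine exists_congr fun g ↦ and_congr_right fun _ ↦ ⟨fun h ↦ ?_, ?_⟩
  · choose C hC using h
    exact ⟨.of C, by ext i j; simp [mul_comm a, hC]⟩
  · rintro ⟨C, hC⟩ i j
    exact ⟨C i j, by simp [hC, mul_comm]⟩

lemma principalCongruenceSubgroup_mono :
    Monotone (principalCongruenceSubgroup (R := R) n) := by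
  intro I J hIJ A hA
  rw [← bot_sup_eq (principalCongruenceSubgroup n _), mem_sup_principalCongruenceSubgroup] at hA ⊢
  exact hA.imp fun g hg ↦ ⟨hg.1, fun i j ↦ hIJ (hg.2 i j)⟩

variable (G) in
/-- The leading terms `X` of the elements `1 + a ^ (k + 1) X + O(a ^ (k + 2))` of `G`. The exponent
is positive so that multiplication in `G` induces addition of leading terms. -/
def leadingTerms (a : R) (k : ℕ) : AddSubmonoid (Matrix n n R) where
  carrier := {X | ∃ g ∈ G, ∃ C : Matrix n n R,
    (g : Matrix n n R) = 1 + a ^ (k + 1) • X + a ^ (k + 2) • C}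
  zero_mem' := ⟨1, one_mem G, 0, by simp⟩
  add_mem' := by
    rintro X Y ⟨g, hg, C, hC⟩ ⟨h, hh, D, hD⟩
    refine ⟨g * h, mul_mem hg hh, C + D + a ^ k • ((X + a • C) * (Y + a • D)), ?_⟩
    simp only [Matrix.SpecialLinearGroup.coe_mul, hC, hD, add_mul, mul_add, smul_mul_assoc,
      mul_smul_comm, one_mul, mul_one]
    module

lemma vecMulVec_mem_leadingTerms {m k : ℕ} (hk : 1 ≤ k ∨ m.Coprime 6)
    (hG : G ⊔ principalCongruenceSubgroup n (Ideal.span {(m : R) ^ (k + 1)}) = ⊤)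
    {u v : n → R} (huv : v ⬝ᵥ u = 0) : vecMulVec u v ∈ leadingTerms G (m : R) k := by
  have hdet : (1 + (m : R) ^ k • vecMulVec u v).det = 1 := by
    rw [← smul_vecMulVec, vecMulVec_eq Unit, det_one_add_replicateCol_mul_replicateRow,
      dotProduct_smul, huv, smul_zero, add_zero]
  have hsq : vecMulVec u v * vecMulVec u v = 0 := by
    rw [vecMulVec_mul_vecMulVec, huv, zero_smul, vecMulVec_zero]
  obtain ⟨g, hg, C, hC⟩ := mem_sup_principalCongruenceSubgroup_span_singleton.mp
    (hG ▸ Subgroup.mem_top (G := Matrix.SpecialLinearGroup n R) ⟨_, hdet⟩)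
  obtain ⟨D, hD⟩ := exists_one_add_pow_smul_pow_eq (R := R) hk hsq C
  exact ⟨g ^ m, pow_mem hg m, D, by rw [Matrix.SpecialLinearGroup.coe_pow, hC, hD]⟩

lemma principalCongruenceSubgroup_le_sup {a : R} (ha : a ∈ nonZeroDivisors R) {k : ℕ}
    (hG : ∀ X : Matrix n n R, X.trace = 0 → X ∈ leadingTerms G a k) :
    principalCongruenceSubgroup n (Ideal.span {a ^ (k + 1)}) ≤
      G ⊔ principalCongruenceSubgroup n (Ideal.span {a ^ (k + 2)}) := by
  intro A hA
  rw [← bot_sup_eq (principalCongruenceSubgroup n _),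
    mem_sup_principalCongruenceSubgroup_span_singleton] at hA
  obtain ⟨_, rfl, C, hC⟩ := hA
  have hW : (A : Matrix n n R) = 1 + a ^ (k + 1) • -C := by
    rw [smul_neg, ← sub_eq_add_neg, eq_sub_iff_add_eq, ← hC, Matrix.SpecialLinearGroup.coe_one]
  have htrace : a ∣ (-C).trace := (dvd_pow_self a k.succ_ne_zero).trans <|
    dvd_trace_of_det_one_add_smul_eq_one (pow_mem ha (k + 1)) (hW ▸ A.det_coe)
  obtain ⟨X, V, hX, hXV⟩ := exists_trace_eq_zero_add_smul htrace
  obtain ⟨g, hg, D, hD⟩ := hG X hX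
  refine mem_sup_principalCongruenceSubgroup_span_singleton.mpr ⟨g, hg, D - V, ?_⟩
  rw [hD, hW, hXV]
  module

lemma sup_principalCongruenceSubgroup_pow_succ_eq_top {m k : ℕ} (hk : 1 ≤ k ∨ m.Coprime 6)
    (hm : (m : R) ∈ nonZeroDivisors R)
    (hG : G ⊔ principalCongruenceSubgroup n (Ideal.span {(m : R) ^ (k + 1)}) = ⊤) :
    G ⊔ principalCongruenceSubgroup n (Ideal.span {(m : R) ^ (k + 2)}) = ⊤ := by
  have hlead : rankOneNilpotentSpan n R ≤ leadingTerms G (m : R) k := by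
    rw [rankOneNilpotentSpan, AddSubmonoid.closure_le]
    rintro _ ⟨u, v, huv, rfl⟩
    exact vecMulVec_mem_leadingTerms hk hG huv
  refine top_unique (hG.ge.trans (sup_le le_sup_left ?_))
  exact principalCongruenceSubgroup_le_sup hm fun X hX ↦
    hlead (mem_rankOneNilpotentSpan_of_trace_eq_zero hX)

lemma sup_principalCongruenceSubgroup_pow_eq_top {m e : ℕ} (he : 2 ≤ e ∨ 1 ≤ e ∧ m.Coprime 6)
    (hm : (m : R) ∈ nonZeroDivisors R)
    (hG : G ⊔ principalCongruenceSubgroup n (Ideal.span {(m : R) ^ e}) = ⊤) (k : ℕ) :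
    G ⊔ principalCongruenceSubgroup n (Ideal.span {(m : R) ^ k}) = ⊤ := by
  obtain ⟨d, rfl⟩ := Nat.exists_eq_add_of_le' (show 1 ≤ e by omega)
  have hadd : ∀ j, G ⊔ principalCongruenceSubgroup n (Ideal.span {(m : R) ^ (d + j + 1)}) = ⊤ := by
    intro j
    induction j with
    | zero => exact hG
    | succ j ih =>
      exact sup_principalCongruenceSubgroup_pow_succ_eq_top
        (k := d + j) (he.imp (fun h ↦ by omega) And.right) hm ih
  have hle : Ideal.span {(m : R) ^ (d + k + 1)} ≤ Ideal.span {(m : R) ^ k} :=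
    Ideal.span_singleton_le_span_singleton.mpr (pow_dvd_pow _ (by omega))
  exact eq_top_mono (sup_le_sup_left (principalCongruenceSubgroup_mono hle) G) (hadd k)

variable [TopologicalSpace R] [IsTopologicalRing R] [IsLinearTopology R R]

open Filter Topology

lemma eq_top_of_isClosed_of_forall_sup_eq_top {a : R} (ha : IsTopologicallyNilpotent a)
    (hG : IsClosed (G : Set (Matrix.SpecialLinearGroup n R)))
    (h : ∀ k, G ⊔ principalCongruenceSubgroup n (Ideal.span {a ^ k}) = ⊤) : G = ⊤ := by
  refine eq_top_iff.mpr fun A _ ↦ ?_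
  choose g hg C hC using fun k ↦
    mem_sup_principalCongruenceSubgroup_span_singleton.mp (h k ▸ Subgroup.mem_top A)
  have hlim : Tendsto g atTop (𝓝 A) := by
    refine tendsto_subtype_rng.mpr (tendsto_pi_nhds.mpr fun i ↦ tendsto_pi_nhds.mpr fun j ↦ ?_)
    have hzero : Tendsto (fun k ↦ C k i j * a ^ k) atTop (𝓝 0) :=
      IsLinearTopology.tendsto_mul_zero_of_right _ _ ha
    simpa [hC, mul_comm] using hzero.const_add (A i j)
  exact hG.mem_of_tendsto hlim (Eventually.of_forall hg)

end Congruence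

section GeneralLinear

variable {n R S : Type*} [Fintype n] [DecidableEq n] [CommRing R] [CommRing S]

lemma range_toGL_eq_ker_det :
    (Matrix.SpecialLinearGroup.toGL : Matrix.SpecialLinearGroup n R →* GL n R).range =
      GeneralLinearGroup.det.ker :=
  SetLike.coe_injective Matrix.SpecialLinearGroup.range_toGL

lemma comap_toGL_sup_principalCongruenceSubgroup_eq_top (f : R →+* S) {G : Subgroup (GL n R)}
    (hSL : G ≤ GeneralLinearGroup.det.ker)
    (hG : GeneralLinearGroup.det.ker ≤ G.map (GeneralLinearGroup.map f)) :
    G.comap Matrix.SpecialLinearGroup.toGL ⊔ principalCongruenceSubgroup n (RingHom.ker f) = ⊤ := by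
  refine eq_top_iff.mpr fun A _ ↦ mem_sup_principalCongruenceSubgroup.mpr ?_
  have hA : GeneralLinearGroup.map f A.toGL ∈ (GeneralLinearGroup.det (n := n) (R := S)).ker := by
    rw [← range_toGL_eq_ker_det]
    exact ⟨Matrix.SpecialLinearGroup.map f A, Units.ext rfl⟩
  obtain ⟨g, hg, hgA⟩ := hG hA
  obtain ⟨B, rfl⟩ := range_toGL_eq_ker_det.ge (hSL hg)
  refine ⟨B, hg, fun i j ↦ (RingHom.sub_mem_ker_iff f).mpr ?_⟩
  exact congrArg (fun h : GL n S ↦ h i j) hgA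

end GeneralLinear

section Padic

variable (p : ℕ) [hp : Fact p.Prime]

instance isLinearTopology_padicInt : IsLinearTopology ℤ_[p] ℤ_[p] := by
  refine .mk_of_hasBasis ℤ_[p] (s := fun k : ℕ ↦ Ideal.span {(p : ℤ_[p]) ^ k})
    (p := fun _ ↦ True) ?_
  have hball (k : ℕ) : Metric.closedBall (0 : ℤ_[p]) ((p : ℝ)⁻¹ ^ k) =
      (Ideal.span {(p : ℤ_[p]) ^ k} : Ideal ℤ_[p]) := by
    ext x
    simp [← PadicInt.norm_le_pow_iff_mem_span_pow]
  simp_rw [← hball]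
  exact Metric.nhds_basis_closedBall_pow (by simp [hp.out.pos])
    (inv_lt_one_of_one_lt₀ (mod_cast hp.out.one_lt))

lemma isTopologicallyNilpotent_natCast_padicInt : IsTopologicallyNilpotent (p : ℤ_[p]) :=
  tendsto_pow_atTop_nhds_zero_of_norm_lt_one <| by
    rw [PadicInt.norm_p]
    exact inv_lt_one_of_one_lt₀ (mod_cast hp.out.one_lt)

variable {p}

lemma two_le_or_coprime_six_of_eq_ite {e : ℕ}
    (he : e = if p = 2 then 3 else if p = 3 then 2 else 1) : 2 ≤ e ∨ 1 ≤ e ∧ p.Coprime 6 := by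
  subst he
  split_ifs with h2 h3
  · simp
  · simp
  refine .inr ⟨le_rfl, ?_⟩
  rw [show 6 = 2 * 3 from rfl, Nat.coprime_mul_iff_right, Nat.coprime_primes hp.out Nat.prime_two,
    Nat.coprime_primes hp.out Nat.prime_three]
  exact ⟨h2, h3⟩

end Padic

theorem closed_subgroup_SL2_full_mod_pow_eq_SL2_general
    {n R S : Type*} [Fintype n] [DecidableEq n] [CommRing R] [CommRing S] [TopologicalSpace R]
    [IsTopologicalRing R] [IsLinearTopology R R] {m e : ℕ} (he : 2 ≤ e ∨ 1 ≤ e ∧ m.Coprime 6)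
    (hm : (m : R) ∈ nonZeroDivisors R) (hnil : IsTopologicallyNilpotent (m : R))
    (f : R →+* S) (hf : RingHom.ker f ≤ Ideal.span {(m : R) ^ e})
    (G : Subgroup (GL n R)) (hSL : G ≤ GeneralLinearGroup.det.ker)
    (hclosed : IsClosed (G : Set (GL n R)))
    (hred : GeneralLinearGroup.det.ker ≤ G.map (GeneralLinearGroup.map f)) :
    G = GeneralLinearGroup.det.ker := by
  have hfull : G.comap Matrix.SpecialLinearGroup.toGL ⊔
      principalCongruenceSubgroup n (Ideal.span {(m : R) ^ e}) = ⊤ :=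
    eq_top_mono (sup_le_sup_left (principalCongruenceSubgroup_mono hf) _)
      (comap_toGL_sup_principalCongruenceSubgroup_eq_top f hSL hred)
  have htop : G.comap Matrix.SpecialLinearGroup.toGL = ⊤ :=
    eq_top_of_isClosed_of_forall_sup_eq_top hnil
      (hclosed.preimage Matrix.SpecialLinearGroup.continuous_toGL)
      (sup_principalCongruenceSubgroup_pow_eq_top he hm hfull)
  refine le_antisymm hSL ?_
  rw [← range_toGL_eq_ker_det, MonoidHom.range_eq_map, Subgroup.map_le_iff_le_comap, htop]

/-- Fix a prime `ℓ`. Let `G` be a closed subgroup of `SL₂(ℤ_ℓ)` (realized as a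
closed subgroup of `GL₂(ℤ_ℓ)` contained in the kernel of the determinant) whose image modulo
`ℓ^e` equals `SL₂(ℤ/ℓ^eℤ)`, where `e = 3` if `ℓ = 2`, `e = 2` if `ℓ = 3`, and `e = 1` if
`ℓ ≥ 5`. Then `G = SL₂(ℤ_ℓ)`. -/
theorem closed_subgroup_SL2_full_mod_pow_eq_SL2
    (ℓ : ℕ) [Fact ℓ.Prime] (e : ℕ)
    (he : e = if ℓ = 2 then 3 else if ℓ = 3 then 2 else 1)
    (G : Subgroup (GL (Fin 2) ℤ_[ℓ]))
    (hSL : G ≤ (Matrix.GeneralLinearGroup.det : GL (Fin 2) ℤ_[ℓ] →* ℤ_[ℓ]ˣ).ker)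
    (hclosed : IsClosed (G : Set (GL (Fin 2) ℤ_[ℓ])))
    (hred : G.map (Matrix.GeneralLinearGroup.map (PadicInt.toZModPow e : ℤ_[ℓ] →+* ZMod (ℓ ^ e)))
      = (Matrix.GeneralLinearGroup.det : GL (Fin 2) (ZMod (ℓ ^ e)) →* (ZMod (ℓ ^ e))ˣ).ker) :
    G = (Matrix.GeneralLinearGroup.det : GL (Fin 2) ℤ_[ℓ] →* ℤ_[ℓ]ˣ).ker :=
  closed_subgroup_SL2_full_mod_pow_eq_SL2_general (two_le_or_coprime_six_of_eq_ite he)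
    (mem_nonZeroDivisors_of_ne_zero (Nat.cast_ne_zero.mpr (Fact.out : ℓ.Prime).ne_zero))
    (isTopologicallyNilpotent_natCast_padicInt ℓ) _ (PadicInt.ker_toZModPow e).le
    G hSL hclosed hred.ge
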